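/- arXiv:2003.09522 — 2 statements merged into one kernel-verified Lean document; each statement's English description precedes it below -/
import Mathlib

section
/- The logic RmbC is definable within the minimal bimodal logic E⊕E: for every set of formulas Γ ∪ {φ} over Σ, Γ ⊢_RmbC φ if and only if Γ^t ⊢_{E⊕E} φ^t, where (·)^t is the translation from For(Σ) to For(Σbm) which commutes with ∧, ∨, → and the propositional variables and satisfies (¬ψ)^t = ψ^t → □1 ψ^t and (∘ψ)^t = ∼(ψ^t ∧ □1 ψ^t) ∧ □2 ψ^t, and Γ^t = {ψ^t : ψ ∈ Γ}. -/
namespace LFI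

/-- Formulas over the propositional signature Σ = {∧,∨,→,¬,∘}:
`neg` is the paraconsistent negation ¬ and `circ` the consistency operator ∘. -/
inductive Formula : Type
  | var : ℕ → Formula
  | and : Formula → Formula → Formula
  | or : Formula → Formula → Formula
  | imp : Formula → Formula → Formula
  | neg : Formula → Formula
  | circ : Formula → Formula

namespace Formula

/-- `α ↔ β` abbreviates `(α→β) ∧ (β→α)`. -/
def iffF (a b : Formula) : Formula := and (imp a b) (imp b a)

/-- Conjunction `γ ∧ γ₁ ∧ … ∧ γₙ` of the nonempty list `γ :: l` (right-associated). -/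
def conjL (γ : Formula) : List Formula → Formula
  | [] => γ
  | ψ :: l => and γ (conjL ψ l)

/-- `subst p α γ` is `γ[p/α]`: the result of replacing every occurrence of
the propositional variable `p` in `γ` by `α`. -/
def subst (p : ℕ) (α : Formula) : Formula → Formula
  | var q => if q = p then α else var q
  | and a b => and (subst p α a) (subst p α b)
  | or a b => or (subst p α a) (subst p α b)
  | imp a b => imp (subst p α a) (subst p α b)
  | neg a => neg (subst p α a)
  | circ a => circ (subst p α a)

end Formula

open Formula

/-- Theoremhood for the Hilbert calculus `RmbC` (axioms Ax1–Ax10 of CPL⁺ plus (bc1),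
modus ponens and the replacement rules (R¬), (R∘)) extended with an arbitrary set `Ax`
of extra axiom(-schema instance)s.  `Prf ∅` is theoremhood in RmbC itself. -/
inductive Prf (Ax : Set Formula) : Formula → Prop
  | ax1 (a b : Formula) : Prf Ax (imp a (imp b a))
  | ax2 (a b c : Formula) :
      Prf Ax (imp (imp a (imp b c)) (imp (imp a b) (imp a c)))
  | ax3 (a b : Formula) : Prf Ax (imp a (imp b (and a b)))
  | ax4 (a b : Formula) : Prf Ax (imp (and a b) a)
  | ax5 (a b : Formula) : Prf Ax (imp (and a b) b)
  | ax6 (a b : Formula) : Prf Ax (imp a (or a b))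
  | ax7 (a b : Formula) : Prf Ax (imp b (or a b))
  | ax8 (a b c : Formula) :
      Prf Ax (imp (imp a c) (imp (imp b c) (imp (or a b) c)))
  | ax9 (a b : Formula) : Prf Ax (or (imp a b) a)
  | ax10 (a : Formula) : Prf Ax (or a (neg a))
  | bc1 (a b : Formula) : Prf Ax (imp (circ a) (imp a (imp (neg a) b)))
  | ext {a : Formula} : a ∈ Ax → Prf Ax a
  | mp {a b : Formula} : Prf Ax (imp a b) → Prf Ax a → Prf Ax b
  | rneg {a b : Formula} : Prf Ax (iffF a b) → Prf Ax (iffF (neg a) (neg b))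
  | rcirc {a b : Formula} : Prf Ax (iffF a b) → Prf Ax (iffF (circ a) (circ b))

/-- Local derivation from premises: `Γ ⊢ φ` iff `φ` is a theorem, or there is a
finite nonempty subset `{γ, γ₁, …, γₙ} ⊆ Γ` with `⊢ (γ ∧ γ₁ ∧ … ∧ γₙ) → φ`. -/
def Deriv (Ax Γ : Set Formula) (φ : Formula) : Prop :=
  Prf Ax φ ∨ ∃ (γ : Formula) (l : List Formula),
    γ ∈ Γ ∧ (∀ ψ ∈ l, ψ ∈ Γ) ∧ Prf Ax (imp (conjL γ l) φ)

end LFI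

namespace LFI

/-- Bimodal formulas over Σbm = {∧,∨,→,∼,□₁,◇₁,□₂,◇₂} (`snot` is classical negation ∼). -/
inductive BForm : Type
  | var : ℕ → BForm
  | and : BForm → BForm → BForm
  | or : BForm → BForm → BForm
  | imp : BForm → BForm → BForm
  | snot : BForm → BForm
  | box1 : BForm → BForm
  | dia1 : BForm → BForm
  | box2 : BForm → BForm
  | dia2 : BForm → BForm

namespace BForm

/-- `α ↔ β` abbreviates `(α→β) ∧ (β→α)`. -/
def iffF (a b : BForm) : BForm := and (imp a b) (imp b a)

/-- Conjunction of the nonempty list `γ :: l` (right-associated). -/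
def conjL (γ : BForm) : List BForm → BForm
  | [] => γ
  | ψ :: l => and γ (conjL ψ l)

end BForm

open BForm

/-- Theoremhood in the minimal bimodal logic E⊕E: CPL⁺ (Ax1–Ax9), (PEM), (exp),
(AxMod_i) for i = 1,2, modus ponens, and the congruence rules (R□_i) for i = 1,2. -/
inductive BPrf : BForm → Prop
  | ax1 (a b : BForm) : BPrf (imp a (imp b a))
  | ax2 (a b c : BForm) :
      BPrf (imp (imp a (imp b c)) (imp (imp a b) (imp a c)))
  | ax3 (a b : BForm) : BPrf (imp a (imp b (and a b)))
  | ax4 (a b : BForm) : BPrf (imp (and a b) a)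
  | ax5 (a b : BForm) : BPrf (imp (and a b) b)
  | ax6 (a b : BForm) : BPrf (imp a (or a b))
  | ax7 (a b : BForm) : BPrf (imp b (or a b))
  | ax8 (a b c : BForm) :
      BPrf (imp (imp a c) (imp (imp b c) (imp (or a b) c)))
  | ax9 (a b : BForm) : BPrf (or (imp a b) a)
  | pem (a : BForm) : BPrf (or a (snot a))
  | exp (a b : BForm) : BPrf (imp a (imp (snot a) b))
  | axMod1 (a : BForm) : BPrf (iffF (dia1 a) (snot (box1 (snot a))))
  | axMod2 (a : BForm) : BPrf (iffF (dia2 a) (snot (box2 (snot a))))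
  | mp {a b : BForm} : BPrf (imp a b) → BPrf a → BPrf b
  | rbox1 {a b : BForm} : BPrf (iffF a b) → BPrf (iffF (box1 a) (box1 b))
  | rbox2 {a b : BForm} : BPrf (iffF a b) → BPrf (iffF (box2 a) (box2 b))

/-- Local derivation from premises in E⊕E. -/
def BDeriv (Γ : Set BForm) (φ : BForm) : Prop :=
  BPrf φ ∨ ∃ (γ : BForm) (l : List BForm),
    γ ∈ Γ ∧ (∀ ψ ∈ l, ψ ∈ Γ) ∧ BPrf (imp (conjL γ l) φ)

/-- Denotation of a bimodal formula in the minimal model `⟨W, N1, N2, d⟩`. -/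
def bden {W : Type} (N1 N2 : W → Set (Set W)) (d : ℕ → Set W) : BForm → Set W
  | .var n => d n
  | .and a b => bden N1 N2 d a ∩ bden N1 N2 d b
  | .or a b => bden N1 N2 d a ∪ bden N1 N2 d b
  | .imp a b => (bden N1 N2 d a)ᶜ ∪ bden N1 N2 d b
  | .snot a => (bden N1 N2 d a)ᶜ
  | .box1 a => {w | bden N1 N2 d a ∈ N1 w}
  | .dia1 a => {w | (bden N1 N2 d a)ᶜ ∉ N1 w}
  | .box2 a => {w | bden N1 N2 d a ∈ N2 w}
  | .dia2 a => {w | (bden N1 N2 d a)ᶜ ∉ N2 w}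

/-- Validity w.r.t. the class C'_M of minimal bimodal models. -/
def BValid (φ : BForm) : Prop :=
  ∀ (W : Type), Nonempty W → ∀ (N1 N2 : W → Set (Set W)) (d : ℕ → Set W),
    bden N1 N2 d φ = Set.univ

/-- Local (degree-preserving) consequence w.r.t. the class C'_M. -/
def BConseq (Γ : Set BForm) (φ : BForm) : Prop :=
  BValid φ ∨ ∃ (γ : BForm) (l : List BForm), γ ∈ Γ ∧ (∀ ψ ∈ l, ψ ∈ Γ) ∧
    BValid (imp (conjL γ l) φ)

/-- The translation `(·)^t : For(Σ) → For(Σbm)`: commutes with ∧,∨,→ and the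
variables, `(¬ψ)^t = ψ^t → □₁ψ^t` and `(∘ψ)^t = ∼(ψ^t ∧ □₁ψ^t) ∧ □₂ψ^t`. -/
def tr : Formula → BForm
  | .var n => .var n
  | .and a b => .and (tr a) (tr b)
  | .or a b => .or (tr a) (tr b)
  | .imp a b => .imp (tr a) (tr b)
  | .neg a => .imp (tr a) (.box1 (tr a))
  | .circ a => .and (.snot (.and (tr a) (.box1 (tr a)))) (.box2 (tr a))

/-!
In RmbC, (bc1) makes `∘p ∧ (p ∧ ¬p)` a falsum, so classical negation is definable there, and the
rules (R¬) and (R∘) are congruence rules for `¬` and `∘`. Reading `□₁` as `¬` and `□₂` as `∘`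
therefore interprets E⊕E in RmbC, just as `tr` interprets RmbC in E⊕E. Translating a formula `a`
there and back yields a formula equivalent to `a` in RmbC, because `a → ¬a` is equivalent to `¬a`
(by Ax10) and `∘a` implies the classical negation of `a ∧ ¬a` (by (bc1)). Hence `tr` also reflects
theoremhood.
-/

/-- `P` is the set of theorems of a calculus with the connectives `imp`, `and`, `or` that contains
CPL⁺ (Ax1–Ax9) and is closed under modus ponens. The formula type is arbitrary so that `RmbC` and
E⊕E can share their positive derivations. -/
structure IsPositiveClassical {F : Type*} (imp and or : F → F → F) (P : F → Prop) : Prop where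
  ax1 (a b : F) : P (imp a (imp b a))
  ax2 (a b c : F) : P (imp (imp a (imp b c)) (imp (imp a b) (imp a c)))
  ax3 (a b : F) : P (imp a (imp b (and a b)))
  ax4 (a b : F) : P (imp (and a b) a)
  ax5 (a b : F) : P (imp (and a b) b)
  ax6 (a b : F) : P (imp a (or a b))
  ax7 (a b : F) : P (imp b (or a b))
  ax8 (a b c : F) : P (imp (imp a c) (imp (imp b c) (imp (or a b) c)))
  ax9 (a b : F) : P (or (imp a b) a)
  mp {a b : F} : P (imp a b) → P a → P b

/-- Derivability from the hypotheses in the list `H` and the theorems in `P` by modus ponens alone.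
Other rules of a calculus may be used only inside `P`, which is what makes the deduction theorem
`IsPositiveClassical.imp_intro` hold. -/
inductive DerivableFrom {F : Type*} (imp : F → F → F) (P : F → Prop) (H : List F) : F → Prop
  | hyp {a : F} : a ∈ H → DerivableFrom imp P H a
  | thm {a : F} : P a → DerivableFrom imp P H a
  | mp {a b : F} :
      DerivableFrom imp P H (imp a b) → DerivableFrom imp P H a → DerivableFrom imp P H b

namespace IsPositiveClassical

variable {F : Type*} {imp and or : F → F → F} {P : F → Prop} {H : List F} {a b c d : F}

theorem imp_refl (C : IsPositiveClassical imp and or P) (a : F) : P (imp a a) :=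
  C.mp (C.mp (C.ax2 a (imp a a) a) (C.ax1 a (imp a a))) (C.ax1 a a)

theorem imp_intro (C : IsPositiveClassical imp and or P) (h : DerivableFrom imp P (a :: H) b) :
    DerivableFrom imp P H (imp a b) := by
  induction h with
  | hyp hmem =>
    rcases List.mem_cons.1 hmem with rfl | hmem
    · exact .thm (C.imp_refl _)
    · exact .mp (.thm (C.ax1 _ _)) (.hyp hmem)
  | thm hP => exact .mp (.thm (C.ax1 _ _)) (.thm hP)
  | mp _ _ ihImp ih => exact .mp (.mp (.thm (C.ax2 _ _ _)) ihImp) ih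

theorem of_derivableFrom_nil (C : IsPositiveClassical imp and or P)
    (h : DerivableFrom imp P [] a) : P a := by
  induction h with
  | hyp hmem => exact absurd hmem List.not_mem_nil
  | thm hP => exact hP
  | mp _ _ ihImp ih => exact C.mp ihImp ih

theorem of_derivableFrom_singleton (C : IsPositiveClassical imp and or P)
    (h : DerivableFrom imp P [a] b) : P (imp a b) :=
  C.of_derivableFrom_nil (C.imp_intro h)

theorem and_intro (C : IsPositiveClassical imp and or P) (ha : DerivableFrom imp P H a)
    (hb : DerivableFrom imp P H b) : DerivableFrom imp P H (and a b) :=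
  .mp (.mp (.thm (C.ax3 a b)) ha) hb

theorem and_left (C : IsPositiveClassical imp and or P) (h : DerivableFrom imp P H (and a b)) :
    DerivableFrom imp P H a :=
  .mp (.thm (C.ax4 a b)) h

theorem and_right (C : IsPositiveClassical imp and or P) (h : DerivableFrom imp P H (and a b)) :
    DerivableFrom imp P H b :=
  .mp (.thm (C.ax5 a b)) h

theorem or_elim (C : IsPositiveClassical imp and or P) (h : DerivableFrom imp P H (or a b))
    (hac : DerivableFrom imp P (a :: H) c) (hbc : DerivableFrom imp P (b :: H) c) :
    DerivableFrom imp P H c :=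
  .mp (.mp (.mp (.thm (C.ax8 a b c)) (C.imp_intro hac)) (C.imp_intro hbc)) h

theorem or_imp_self (C : IsPositiveClassical imp and or P) (a b : F) : P (or a (imp a b)) :=
  C.mp (C.mp (C.mp (C.ax8 _ _ _) (C.ax7 a (imp a b))) (C.ax6 a (imp a b))) (C.ax9 a b)

theorem imp_trans (C : IsPositiveClassical imp and or P) (hab : P (imp a b)) (hbc : P (imp b c)) :
    P (imp a c) :=
  C.of_derivableFrom_singleton (.mp (.thm hbc) (.mp (.thm hab) (.hyp (by simp))))

theorem and_mono (C : IsPositiveClassical imp and or P) (hab : P (imp a b)) (hcd : P (imp c d)) :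
    P (imp (and a c) (and b d)) := by
  have hac : DerivableFrom imp P [and a c] (and a c) := .hyp (by simp)
  exact C.of_derivableFrom_singleton
    (C.and_intro (.mp (.thm hab) (C.and_left hac)) (.mp (.thm hcd) (C.and_right hac)))

theorem or_mono (C : IsPositiveClassical imp and or P) (hab : P (imp a b)) (hcd : P (imp c d)) :
    P (imp (or a c) (or b d)) :=
  C.mp (C.mp (C.ax8 _ _ _) (C.imp_trans hab (C.ax6 b d))) (C.imp_trans hcd (C.ax7 b d))

theorem imp_mono (C : IsPositiveClassical imp and or P) (hba : P (imp b a)) (hcd : P (imp c d)) :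
    P (imp (imp a c) (imp b d)) := by
  have hb : DerivableFrom imp P [b, imp a c] b := .hyp (by simp)
  have hac : DerivableFrom imp P [b, imp a c] (imp a c) := .hyp (by simp)
  exact C.of_derivableFrom_singleton
    (C.imp_intro (.mp (.thm hcd) (.mp hac (.mp (.thm hba) hb))))

theorem iff_intro (C : IsPositiveClassical imp and or P) (hab : P (imp a b)) (hba : P (imp b a)) :
    P (and (imp a b) (imp b a)) :=
  C.mp (C.mp (C.ax3 _ _) hab) hba

theorem iff_mp (C : IsPositiveClassical imp and or P) (h : P (and (imp a b) (imp b a))) :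
    P (imp a b) :=
  C.mp (C.ax4 _ _) h

theorem iff_mpr (C : IsPositiveClassical imp and or P) (h : P (and (imp a b) (imp b a))) :
    P (imp b a) :=
  C.mp (C.ax5 _ _) h

theorem iff_refl (C : IsPositiveClassical imp and or P) (a : F) : P (and (imp a a) (imp a a)) :=
  C.iff_intro (C.imp_refl a) (C.imp_refl a)

theorem iff_trans (C : IsPositiveClassical imp and or P) (hab : P (and (imp a b) (imp b a)))
    (hbc : P (and (imp b c) (imp c b))) : P (and (imp a c) (imp c a)) :=
  C.iff_intro (C.imp_trans (C.iff_mp hab) (C.iff_mp hbc))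
    (C.imp_trans (C.iff_mpr hbc) (C.iff_mpr hab))

theorem and_congr (C : IsPositiveClassical imp and or P) (hab : P (and (imp a b) (imp b a)))
    (hcd : P (and (imp c d) (imp d c))) :
    P (and (imp (and a c) (and b d)) (imp (and b d) (and a c))) :=
  C.iff_intro (C.and_mono (C.iff_mp hab) (C.iff_mp hcd))
    (C.and_mono (C.iff_mpr hab) (C.iff_mpr hcd))

theorem or_congr (C : IsPositiveClassical imp and or P) (hab : P (and (imp a b) (imp b a)))
    (hcd : P (and (imp c d) (imp d c))) :
    P (and (imp (or a c) (or b d)) (imp (or b d) (or a c))) :=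
  C.iff_intro (C.or_mono (C.iff_mp hab) (C.iff_mp hcd))
    (C.or_mono (C.iff_mpr hab) (C.iff_mpr hcd))

theorem imp_congr (C : IsPositiveClassical imp and or P) (hab : P (and (imp a b) (imp b a)))
    (hcd : P (and (imp c d) (imp d c))) :
    P (and (imp (imp a c) (imp b d)) (imp (imp b d) (imp a c))) :=
  C.iff_intro (C.imp_mono (C.iff_mpr hab) (C.iff_mp hcd))
    (C.imp_mono (C.iff_mp hab) (C.iff_mpr hcd))

end IsPositiveClassical

theorem Prf.isPositiveClassical (Ax : Set Formula) :
    IsPositiveClassical Formula.imp Formula.and Formula.or (Prf Ax) :=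
  ⟨.ax1, .ax2, .ax3, .ax4, .ax5, .ax6, .ax7, .ax8, .ax9, .mp⟩

theorem BPrf.isPositiveClassical : IsPositiveClassical BForm.imp BForm.and BForm.or BPrf :=
  ⟨.ax1, .ax2, .ax3, .ax4, .ax5, .ax6, .ax7, .ax8, .ax9, .mp⟩

theorem BPrf.snot_anti {a b : BForm} (h : BPrf (imp a b)) : BPrf (imp (snot b) (snot a)) := by
  have C := BPrf.isPositiveClassical
  have ha : DerivableFrom BForm.imp BPrf [a, snot b] a := .hyp (by simp)
  have hnb : DerivableFrom BForm.imp BPrf [a, snot b] (snot b) := .hyp (by simp)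
  have hna : DerivableFrom BForm.imp BPrf [a, snot b] (snot a) :=
    .mp (.mp (.thm (.exp b (snot a))) (.mp (.thm h) ha)) hnb
  exact C.of_derivableFrom_singleton
    (C.or_elim (.thm (.pem a)) hna (.hyp (by simp)))

theorem BPrf.snot_congr {a b : BForm} (h : BPrf (BForm.iffF a b)) :
    BPrf (BForm.iffF (snot a) (snot b)) :=
  have C := BPrf.isPositiveClassical
  C.iff_intro (BPrf.snot_anti (C.iff_mpr h)) (BPrf.snot_anti (C.iff_mp h))

theorem BPrf.tr_bc1 (a b : Formula) : BPrf (tr (.imp (.circ a) (.imp a (.imp (.neg a) b)))) := by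
  have C := BPrf.isPositiveClassical
  let H : List BForm := [tr (.neg a), tr a, tr (.circ a)]
  have hneg : DerivableFrom BForm.imp BPrf H (imp (tr a) (box1 (tr a))) := .hyp (by simp [H, tr])
  have ha : DerivableFrom BForm.imp BPrf H (tr a) := .hyp (by simp [H])
  have hcirc : DerivableFrom BForm.imp BPrf H
      (and (snot (and (tr a) (box1 (tr a)))) (box2 (tr a))) := .hyp (by simp [H, tr])
  have hb : DerivableFrom BForm.imp BPrf H (tr b) :=
    .mp (.mp (.thm (.exp _ _)) (C.and_intro ha (.mp hneg ha))) (C.and_left hcirc)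
  exact C.of_derivableFrom_singleton (C.imp_intro (C.imp_intro hb))

theorem Prf.bprf_tr {a : Formula} (h : Prf ∅ a) : BPrf (tr a) := by
  have C := BPrf.isPositiveClassical
  induction h with
  | ax1 a b => exact .ax1 _ _
  | ax2 a b c => exact .ax2 _ _ _
  | ax3 a b => exact .ax3 _ _
  | ax4 a b => exact .ax4 _ _
  | ax5 a b => exact .ax5 _ _
  | ax6 a b => exact .ax6 _ _
  | ax7 a b => exact .ax7 _ _
  | ax8 a b c => exact .ax8 _ _ _
  | ax9 a b => exact .ax9 _ _
  | ax10 a => exact C.or_imp_self (tr a) (box1 (tr a))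
  | bc1 a b => exact BPrf.tr_bc1 a b
  | ext h => exact absurd h (Set.notMem_empty _)
  | mp _ _ ihImp ih => exact .mp ihImp ih
  | rneg _ ih => exact C.imp_congr ih (.rbox1 ih)
  | rcirc _ ih => exact C.and_congr (BPrf.snot_congr (C.and_congr ih (.rbox1 ih))) (.rbox2 ih)

/-- The falsum `∘p ∧ (p ∧ ¬p)` of RmbC, which implies every formula by (bc1); any formula could
replace the variable `p = var 0`. -/
def Formula.falsum : Formula := and (circ (var 0)) (and (var 0) (neg (var 0)))

/-- Classical negation `a → ⊥` in RmbC, the counterpart of `∼`. -/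
def Formula.strongNeg (a : Formula) : Formula := imp a falsum

/-- The inverse of `tr` up to provable equivalence in RmbC: `□₁` is read as `¬`, `□₂` as `∘` and
`∼` as `strongNeg`; the diamonds follow (AxMod). -/
def backTr : BForm → Formula
  | .var n => .var n
  | .and a b => .and (backTr a) (backTr b)
  | .or a b => .or (backTr a) (backTr b)
  | .imp a b => .imp (backTr a) (backTr b)
  | .snot a => (backTr a).strongNeg
  | .box1 a => .neg (backTr a)
  | .dia1 a => (Formula.neg (backTr a).strongNeg).strongNeg
  | .box2 a => .circ (backTr a)
  | .dia2 a => (Formula.circ (backTr a).strongNeg).strongNeg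

section RmbC

variable {Ax : Set Formula}

theorem Prf.circ_imp_and_neg_imp (a b : Formula) :
    Prf Ax (.imp (.circ a) (.imp (.and a (.neg a)) b)) := by
  have C := Prf.isPositiveClassical Ax
  have hcirc : DerivableFrom Formula.imp (Prf Ax) [.and a (.neg a), .circ a] (.circ a) :=
    .hyp (by simp)
  have hand : DerivableFrom Formula.imp (Prf Ax) [.and a (.neg a), .circ a] (.and a (.neg a)) :=
    .hyp (by simp)
  exact C.of_derivableFrom_singleton (C.imp_intro
    (.mp (.mp (.mp (.thm (.bc1 a b)) hcirc) (C.and_left hand)) (C.and_right hand)))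

theorem Prf.falsum_imp (b : Formula) : Prf Ax (.imp .falsum b) := by
  have C := Prf.isPositiveClassical Ax
  let p : Formula := .var 0
  have hfalsum : DerivableFrom Formula.imp (Prf Ax) [.falsum]
      (.and (.circ p) (.and p (.neg p))) := .hyp (by simp [Formula.falsum, p])
  exact C.of_derivableFrom_singleton
    (.mp (.mp (.thm (.circ_imp_and_neg_imp p b)) (C.and_left hfalsum)) (C.and_right hfalsum))

theorem Prf.imp_strongNeg_imp (a b : Formula) : Prf Ax (.imp a (.imp a.strongNeg b)) := by
  have C := Prf.isPositiveClassical Ax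
  have hsna : DerivableFrom Formula.imp (Prf Ax) [a.strongNeg, a] (.imp a .falsum) :=
    .hyp (by simp [Formula.strongNeg])
  have ha : DerivableFrom Formula.imp (Prf Ax) [a.strongNeg, a] a := .hyp (by simp)
  exact C.of_derivableFrom_singleton (C.imp_intro (.mp (.thm (.falsum_imp b)) (.mp hsna ha)))

theorem BPrf.prf_backTr {a : BForm} (h : BPrf a) : Prf Ax (backTr a) := by
  have C := Prf.isPositiveClassical Ax
  induction h with
  | ax1 a b => exact .ax1 _ _
  | ax2 a b c => exact .ax2 _ _ _
  | ax3 a b => exact .ax3 _ _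
  | ax4 a b => exact .ax4 _ _
  | ax5 a b => exact .ax5 _ _
  | ax6 a b => exact .ax6 _ _
  | ax7 a b => exact .ax7 _ _
  | ax8 a b c => exact .ax8 _ _ _
  | ax9 a b => exact .ax9 _ _
  | pem a => exact C.or_imp_self (backTr a) .falsum
  | exp a b => exact Prf.imp_strongNeg_imp (backTr a) (backTr b)
  | axMod1 a => exact C.iff_refl _
  | axMod2 a => exact C.iff_refl _
  | mp _ _ ihImp ih => exact .mp ihImp ih
  | rbox1 _ ih => exact .rneg ih
  | rbox2 _ ih => exact .rcirc ih

theorem Prf.imp_neg_iff_neg (a : Formula) : Prf Ax (Formula.iffF (.imp a (.neg a)) (.neg a)) := by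
  have C := Prf.isPositiveClassical Ax
  have ha : DerivableFrom Formula.imp (Prf Ax) [a, .imp a (.neg a)] a := .hyp (by simp)
  have himp : DerivableFrom Formula.imp (Prf Ax) [a, .imp a (.neg a)] (.imp a (.neg a)) :=
    .hyp (by simp)
  exact C.iff_intro
    (C.of_derivableFrom_singleton (C.or_elim (.thm (.ax10 a)) (.mp himp ha) (.hyp (by simp))))
    (.ax1 _ _)

theorem Prf.strongNeg_and_circ_iff_circ (a : Formula) :
    Prf Ax (Formula.iffF (.and (Formula.and a (.neg a)).strongNeg (.circ a)) (.circ a)) :=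
  have C := Prf.isPositiveClassical Ax
  C.iff_intro (.ax5 _ _) (C.of_derivableFrom_singleton
    (C.and_intro (.mp (.thm (.circ_imp_and_neg_imp a .falsum)) (.hyp (by simp))) (.hyp (by simp))))

theorem Prf.backTr_tr_iff (a : Formula) : Prf Ax (Formula.iffF (backTr (tr a)) a) := by
  have C := Prf.isPositiveClassical Ax
  induction a with
  | var n => exact C.iff_refl _
  | and a b iha ihb => exact C.and_congr iha ihb
  | or a b iha ihb => exact C.or_congr iha ihb
  | imp a b iha ihb => exact C.imp_congr iha ihb
  | neg a ih => exact C.iff_trans (.imp_neg_iff_neg _) (.rneg ih)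
  | circ a ih => exact C.iff_trans (.strongNeg_and_circ_iff_circ _) (.rcirc ih)

end RmbC

theorem prf_iff_bprf_tr {a : Formula} : Prf ∅ a ↔ BPrf (tr a) :=
  ⟨Prf.bprf_tr, fun h =>
    .mp ((Prf.isPositiveClassical ∅).iff_mp (Prf.backTr_tr_iff a)) h.prf_backTr⟩

theorem tr_conjL (γ : Formula) (l : List Formula) :
    tr (Formula.conjL γ l) = BForm.conjL (tr γ) (l.map tr) := by
  induction l generalizing γ with
  | nil => rfl
  | cons ψ l ih => simp only [Formula.conjL, BForm.conjL, tr, List.map_cons, ih]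

theorem prf_conjL_imp_iff_bprf_tr {γ φ : Formula} {l : List Formula} :
    Prf ∅ (.imp (Formula.conjL γ l) φ) ↔
      BPrf (.imp (BForm.conjL (tr γ) (l.map tr)) (tr φ)) := by
  rw [prf_iff_bprf_tr, tr, tr_conjL]

theorem image_map_setOf_forall_mem {α β : Type*} (f : α → β) (s : Set α) :
    List.map f '' {l | ∀ x ∈ l, x ∈ s} = {l | ∀ y ∈ l, y ∈ f '' s} := by
  rw [← Set.range_list_map_coe, ← Set.range_comp, List.map_comp_map, Set.range_list_map,
    Set.range_comp, Subtype.range_coe]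

/-- Theorem 5.15: RmbC is definable within E⊕E:
`Γ ⊢_RmbC φ` iff `Γ^t ⊢_{E⊕E} φ^t`. -/
theorem rmbc_definable_in_eoe (Γ : Set Formula) (φ : Formula) :
    Deriv ∅ Γ φ ↔ BDeriv (tr '' Γ) (tr φ) := by
  refine or_congr prf_iff_bprf_tr ⟨?_, ?_⟩
  · rintro ⟨γ, l, hγ, hl, h⟩
    exact ⟨tr γ, l.map tr, Set.mem_image_of_mem tr hγ,
      List.forall_mem_map.2 fun ψ hψ => Set.mem_image_of_mem tr (hl ψ hψ),
      prf_conjL_imp_iff_bprf_tr.1 h⟩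
  · rintro ⟨_, l', ⟨γ, hγ, rfl⟩, hl', h⟩
    obtain ⟨l, hl, rfl⟩ : l' ∈ List.map tr '' {l | ∀ ψ ∈ l, ψ ∈ Γ} := by
      rwa [image_map_setOf_forall_mem]
    exact ⟨γ, l, hγ, hl, prf_conjL_imp_iff_bprf_tr.2 h⟩

end LFI
end

section
/- Completeness of RQmbC with respect to BALFI semantics: for every set Γ ∪ {φ} of sentences (closed formulas) over Ω, if Γ ⊨_RQmbC φ then Γ ⊢_RQmbC φ. -/
namespace LFI

/-- The conditions making unary operations `nB` (¬) and `cB` (∘) on a Boolean algebra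
into LFI operators: `a ∨ ¬a = 1` and `a ∧ ¬a ∧ ∘a = 0`.  A BALFI is a Boolean algebra
equipped with two such operations. -/
def IsBALFI {A : Type*} [BooleanAlgebra A] (nB cB : A → A) : Prop :=
  (∀ a : A, a ⊔ nB a = ⊤) ∧ (∀ a : A, a ⊓ nB a ⊓ cB a = ⊥)

end LFI

namespace LFI

/-- First-order terms over a signature with individual constants `C` and
`n`-ary function symbols `F n`; variables are indexed by ℕ. -/
inductive FTerm (C : Type) (F : ℕ → Type) : Type
  | var : ℕ → FTerm C F
  | const : C → FTerm C F
  | func : {n : ℕ} → F n → (Fin n → FTerm C F) → FTerm C F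

namespace FTerm

variable {C : Type} {F : ℕ → Type}

/-- The set of variables occurring in a term. -/
def vars : FTerm C F → Set ℕ
  | var x => {x}
  | const _ => ∅
  | func _ ts => ⋃ i, (ts i).vars

/-- Substitution of the term `t` for the variable `z` in a term. -/
def tsubst (z : ℕ) (t : FTerm C F) : FTerm C F → FTerm C F
  | var x => if x = z then t else var x
  | const c => const c
  | func f ts => func f (fun i => tsubst z t (ts i))

end FTerm

/-- First-order formulas over the signature Ω extending Σ = {∧,∨,→,¬,∘} with
constants `C`, function symbols `F` and predicate symbols `P` (arity-indexed). -/
inductive FForm (C : Type) (F P : ℕ → Type) : Type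
  | rel : {n : ℕ} → P n → (Fin n → FTerm C F) → FForm C F P
  | and : FForm C F P → FForm C F P → FForm C F P
  | or : FForm C F P → FForm C F P → FForm C F P
  | imp : FForm C F P → FForm C F P → FForm C F P
  | neg : FForm C F P → FForm C F P
  | circ : FForm C F P → FForm C F P
  | all : ℕ → FForm C F P → FForm C F P
  | ex : ℕ → FForm C F P → FForm C F P

namespace FForm

variable {C : Type} {F P : ℕ → Type}

/-- `α ↔ β` abbreviates `(α→β) ∧ (β→α)`. -/
def iffF (a b : FForm C F P) : FForm C F P := and (imp a b) (imp b a)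

/-- Conjunction of the nonempty list `γ :: l` (right-associated). -/
def conjL (γ : FForm C F P) : List (FForm C F P) → FForm C F P
  | [] => γ
  | ψ :: l => and γ (conjL ψ l)

/-- The set of free variables of a formula. -/
def fv : FForm C F P → Set ℕ
  | rel _ ts => ⋃ i, (ts i).vars
  | and a b => fv a ∪ fv b
  | or a b => fv a ∪ fv b
  | imp a b => fv a ∪ fv b
  | neg a => fv a
  | circ a => fv a
  | all x a => fv a \ {x}
  | ex x a => fv a \ {x}

/-- `subst z t φ` is `φ[z/t]`: substitution of the term `t` for every free
occurrence of the variable `z` in `φ`. -/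
def subst (z : ℕ) (t : FTerm C F) : FForm C F P → FForm C F P
  | rel p ts => rel p (fun i => FTerm.tsubst z t (ts i))
  | and a b => and (subst z t a) (subst z t b)
  | or a b => or (subst z t a) (subst z t b)
  | imp a b => imp (subst z t a) (subst z t b)
  | neg a => neg (subst z t a)
  | circ a => circ (subst z t a)
  | all x a => if x = z then all x a else all x (subst z t a)
  | ex x a => if x = z then ex x a else ex x (subst z t a)

/-- The term `t` is free for the variable `z` in the formula: no variable of `t`
becomes bound when `t` is substituted for the free occurrences of `z`. -/
def FreeFor (t : FTerm C F) (z : ℕ) : FForm C F P → Prop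
  | rel _ _ => True
  | and a b => FreeFor t z a ∧ FreeFor t z b
  | or a b => FreeFor t z a ∧ FreeFor t z b
  | imp a b => FreeFor t z a ∧ FreeFor t z b
  | neg a => FreeFor t z a
  | circ a => FreeFor t z a
  | all x a => z ∉ fv (all x a) ∨ (x ∉ t.vars ∧ FreeFor t z a)
  | ex x a => z ∉ fv (ex x a) ∨ (x ∉ t.vars ∧ FreeFor t z a)

end FForm

open FForm

/-- Theoremhood in the Hilbert calculus RQmbC over the signature Ω: the axioms and
rules of RmbC together with (Ax∀), (Ax∃), (∀-In) and (∃-In). -/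
inductive QPrf {C : Type} {F P : ℕ → Type} : FForm C F P → Prop
  | ax1 (a b : FForm C F P) : QPrf (imp a (imp b a))
  | ax2 (a b c : FForm C F P) :
      QPrf (imp (imp a (imp b c)) (imp (imp a b) (imp a c)))
  | ax3 (a b : FForm C F P) : QPrf (imp a (imp b (and a b)))
  | ax4 (a b : FForm C F P) : QPrf (imp (and a b) a)
  | ax5 (a b : FForm C F P) : QPrf (imp (and a b) b)
  | ax6 (a b : FForm C F P) : QPrf (imp a (or a b))
  | ax7 (a b : FForm C F P) : QPrf (imp b (or a b))
  | ax8 (a b c : FForm C F P) :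
      QPrf (imp (imp a c) (imp (imp b c) (imp (or a b) c)))
  | ax9 (a b : FForm C F P) : QPrf (or (imp a b) a)
  | ax10 (a : FForm C F P) : QPrf (or a (neg a))
  | bc1 (a b : FForm C F P) : QPrf (imp (circ a) (imp a (imp (neg a) b)))
  | mp {a b : FForm C F P} : QPrf (imp a b) → QPrf a → QPrf b
  | rneg {a b : FForm C F P} : QPrf (iffF a b) → QPrf (iffF (neg a) (neg b))
  | rcirc {a b : FForm C F P} : QPrf (iffF a b) → QPrf (iffF (circ a) (circ b))
  | axAll (x : ℕ) (t : FTerm C F) (a : FForm C F P) :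
      FreeFor t x a → QPrf (imp (all x a) (subst x t a))
  | axEx (x : ℕ) (t : FTerm C F) (a : FForm C F P) :
      FreeFor t x a → QPrf (imp (subst x t a) (ex x a))
  | allIn {a b : FForm C F P} (x : ℕ) :
      QPrf (imp a b) → x ∉ fv a → QPrf (imp a (all x b))
  | exIn {a b : FForm C F P} (x : ℕ) :
      QPrf (imp a b) → x ∉ fv b → QPrf (imp (ex x a) b)

/-- Local derivation from premises in RQmbC. -/
def QDeriv {C : Type} {F P : ℕ → Type} (Γ : Set (FForm C F P)) (φ : FForm C F P) : Prop :=
  QPrf φ ∨ ∃ (γ : FForm C F P) (l : List (FForm C F P)),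
    γ ∈ Γ ∧ (∀ ψ ∈ l, ψ ∈ Γ) ∧ QPrf (imp (conjL γ l) φ)

/-- Denotation of a term in a structure with domain `U`, under the assignment `μ`. -/
def tden {C : Type} {F : ℕ → Type} {U : Type} (iC : C → U)
    (iF : ∀ n, F n → (Fin n → U) → U) (μ : ℕ → U) : FTerm C F → U
  | .var x => μ x
  | .const c => iC c
  | .func f ts => iF _ f (fun i => tden iC iF μ (ts i))

/-- Interpretation map of first-order formulas in a structure `⟨U, B, I⟩` over a
complete BALFI `B` (with LFI operators `nB`, `cB`), under an assignment:
quantifiers are interpreted as infima/suprema over all x-variants. -/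
def fint {C : Type} {F P : ℕ → Type} {U A : Type} [CompleteBooleanAlgebra A]
    (nB cB : A → A) (iC : C → U) (iF : ∀ n, F n → (Fin n → U) → U)
    (iP : ∀ n, P n → (Fin n → U) → A) : FForm C F P → (ℕ → U) → A
  | .rel p ts, μ => iP _ p (fun i => tden iC iF μ (ts i))
  | .and a b, μ => fint nB cB iC iF iP a μ ⊓ fint nB cB iC iF iP b μ
  | .or a b, μ => fint nB cB iC iF iP a μ ⊔ fint nB cB iC iF iP b μ
  | .imp a b, μ => (fint nB cB iC iF iP a μ)ᶜ ⊔ fint nB cB iC iF iP b μ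
  | .neg a, μ => nB (fint nB cB iC iF iP a μ)
  | .circ a, μ => cB (fint nB cB iC iF iP a μ)
  | .all x a, μ => ⨅ u : U, fint nB cB iC iF iP a (Function.update μ x u)
  | .ex x a, μ => ⨆ u : U, fint nB cB iC iF iP a (Function.update μ x u)

/-- `φ` is valid in RQmbC: it takes value `⊤` under every assignment in every
structure (over any nonempty domain and any complete BALFI). -/
def QValid {C : Type} {F P : ℕ → Type} (φ : FForm C F P) : Prop :=
  ∀ (U : Type), Nonempty U → ∀ (A : Type) [CompleteBooleanAlgebra A],
    ∀ nB cB : A → A, IsBALFI nB cB →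
    ∀ (iC : C → U) (iF : ∀ n, F n → (Fin n → U) → U) (iP : ∀ n, P n → (Fin n → U) → A),
    ∀ μ : ℕ → U, fint nB cB iC iF iP φ μ = ⊤

/-- Local (degree-preserving) semantical consequence for RQmbC w.r.t. BALFI semantics. -/
def QConseq {C : Type} {F P : ℕ → Type} (Γ : Set (FForm C F P)) (φ : FForm C F P) : Prop :=
  QValid φ ∨ ∃ (γ : FForm C F P) (l : List (FForm C F P)),
    γ ∈ Γ ∧ (∀ ψ ∈ l, ψ ∈ Γ) ∧ QValid (imp (conjL γ l) φ)

/-! Provable equivalence classes of formulas form a Boolean algebra carrying `¬` and `∘`, whose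
Dedekind–MacNeille completion is again Boolean, keeps the existing infima and suprema, and becomes
a complete BALFI once `¬` and `∘` are extended arbitrarily within the BALFI laws. Let the domain of
the canonical structure consist of the terms containing none of the finitely many variables bound
in `φ`: substituting such terms never captures a variable, and infinitely many variables remain
available as witnesses, so the class of `∀x α` is the infimum of the classes of the instances of
`α`. By induction `φ` then denotes its own class, which is `⊤` only if `φ` is provable. Open
formulas reduce to sentences by universal closure. -/

section Completion

open DedekindCut

variable {α : Type*}

theorem dedekindCut_le_iff [Preorder α] {A B : DedekindCut α} :
    A ≤ B ↔ ∀ a ∈ A.left, ∀ b ∈ B.right, a ≤ b := by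
  rw [← Concept.extent_subset_extent_iff, ← B.lowerPolar_intent]
  rfl

theorem principal_eq_iInf [Preorder α] {ι : Sort*} {f : ι → α} {a : α}
    (h : IsGLB (Set.range f) a) : principal a = ⨅ i, principal (f i) := by
  refine eq_of_forall_le_iff fun X => ?_
  simp only [le_iInf_iff, le_principal_iff, ← upperBounds_left, mem_upperBounds, le_isGLB_iff h,
    mem_lowerBounds, Set.forall_mem_range]
  exact ⟨fun h i x hx => h x hx i, fun h x hx i => h i x hx⟩

theorem principal_eq_iSup [Preorder α] {ι : Sort*} {f : ι → α} {a : α}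
    (h : IsLUB (Set.range f) a) : principal a = ⨆ i, principal (f i) := by
  refine eq_of_forall_ge_iff fun X => ?_
  simp only [iSup_le_iff, principal_le_iff, ← lowerBounds_right, mem_lowerBounds, isLUB_le_iff h,
    mem_upperBounds, Set.forall_mem_range]
  exact ⟨fun h i x hx => h x hx i, fun h x hx i => h i x hx⟩

/-- `DedekindCut.principal` as a homomorphism of bounded lattices. -/
def principalHom (α : Type*) [Lattice α] [BoundedOrder α] :
    BoundedLatticeHom α (DedekindCut α) where
  toFun := principal
  map_inf' _ _ := eq_of_forall_le_iff fun _ => by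
    simp only [le_inf_iff, le_principal_iff, ← upperBounds_left, mem_upperBounds, forall_and]
  map_sup' _ _ := eq_of_forall_ge_iff fun _ => by
    simp only [sup_le_iff, principal_le_iff, ← lowerBounds_right, mem_lowerBounds, forall_and]
  map_top' := top_le_iff.1 (le_principal_iff.2 fun _ _ => le_top)
  map_bot' := le_bot_iff.1 (principal_le_iff.2 fun _ _ => bot_le)

theorem principalHom_injective [Lattice α] [BoundedOrder α] :
    Function.Injective (principalHom α) :=
  principalEmbedding.injective

noncomputable instance [HeytingAlgebra α] : HeytingAlgebra (DedekindCut α) where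
  himp A B := ⨅ (a ∈ A.left) (b ∈ B.right), principal (a ⇨ b)
  compl A := ⨅ (a ∈ A.left) (b ∈ (⊥ : DedekindCut α).right), principal (a ⇨ b)
  himp_bot _ := rfl
  le_himp_iff A B C := by
    simp only [le_iInf_iff, le_principal_iff, ← upperBounds_left A, mem_upperBounds, le_himp_iff]
    rw [dedekindCut_le_iff]
    constructor
    · rintro h x ⟨hxA, hxB⟩ c hc
      simpa only [inf_idem] using h x hxB c hc x hxA
    · intro h b hb c hc a ha
      exact h _ ⟨A.isLowerSet_extent_le inf_le_left ha, B.isLowerSet_extent_le inf_le_right hb⟩ c hc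

theorem principal_compl_le [HeytingAlgebra α] (a : α) : principal aᶜ ≤ (principal a)ᶜ := by
  have h : principalHom α aᶜ ⊓ principalHom α a = ⊥ := by
    rw [← map_inf, compl_inf_self, map_bot]
  exact le_compl_iff_disjoint_right.2 (disjoint_iff.2 h)

theorem dedekindCut_sup_compl_eq_top [BooleanAlgebra α] (A : DedekindCut α) : A ⊔ Aᶜ = ⊤ := by
  refine top_le_iff.1 (dedekindCut_le_iff.2 fun x _ b hb => ?_)
  obtain ⟨hA, hA'⟩ := sup_le_iff.1 (le_principal_iff.2 hb)
  have h : principal bᶜ ≤ principal b :=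
    calc principal bᶜ ≤ (principal b)ᶜ := principal_compl_le b
      _ ≤ Aᶜ := compl_le_compl hA
      _ ≤ principal b := hA'
  rw [compl_le_self.1 (principal_le_principal.1 h)]
  exact le_top

noncomputable instance [BooleanAlgebra α] : CompleteBooleanAlgebra (DedekindCut α) where
  __ := (inferInstance : CompleteLattice (DedekindCut α))
  __ := BooleanAlgebra.ofRegular (α := DedekindCut α) fun A => by
    rw [dedekindCut_sup_compl_eq_top]
    exact Heyting.isRegular_top

theorem IsBALFI.extend {β : Type*} [BooleanAlgebra α] [BooleanAlgebra β] {nA cA : α → α}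
    (h : IsBALFI nA cA) {f : BoundedLatticeHom α β} (hf : Function.Injective f) :
    IsBALFI (Function.extend f (f ∘ nA) compl) (Function.extend f (f ∘ cA) ⊤) := by
  refine ⟨fun b => ?_, fun b => ?_⟩ <;> by_cases hb : ∃ a, f a = b
  · obtain ⟨a, rfl⟩ := hb
    rw [hf.extend_apply, Function.comp_apply, ← map_sup, h.1, map_top]
  · rw [Function.extend_apply' _ _ _ hb, sup_compl_eq_top]
  · obtain ⟨a, rfl⟩ := hb
    simp only [hf.extend_apply, Function.comp_apply, ← map_inf, h.2, map_bot]
  · rw [Function.extend_apply' _ _ _ hb, inf_compl_self, bot_inf_eq]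

end Completion

section Calculus

variable {C : Type} {F P : ℕ → Type} {a b c : FForm C F P}

namespace QPrf

theorem imp_refl (a : FForm C F P) : QPrf (imp a a) :=
  mp (mp (ax2 a (imp a a) a) (ax1 _ _)) (ax1 _ _)

theorem imp_intro (h : QPrf b) : QPrf (imp a b) := mp (ax1 _ _) h

theorem imp_mp (h : QPrf (imp a (imp b c))) (hb : QPrf (imp a b)) : QPrf (imp a c) :=
  mp (mp (ax2 _ _ _) h) hb

theorem imp_trans (hab : QPrf (imp a b)) (hbc : QPrf (imp b c)) : QPrf (imp a c) :=
  imp_mp (imp_intro hbc) hab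

theorem imp_and (hb : QPrf (imp a b)) (hc : QPrf (imp a c)) : QPrf (imp a (and b c)) :=
  imp_mp (imp_trans hb (ax3 _ _)) hc

theorem or_imp (ha : QPrf (imp a c)) (hb : QPrf (imp b c)) : QPrf (imp (or a b) c) :=
  mp (mp (ax8 _ _ _) ha) hb

theorem imp_imp_iff : QPrf (imp a (imp b c)) ↔ QPrf (imp (and a b) c) :=
  ⟨fun h => imp_mp (imp_trans (ax4 _ _) h) (ax5 _ _),
    fun h => imp_trans (ax3 _ _) (mp (ax2 _ _ _) (imp_intro h))⟩

theorem and_neg_circ_imp (a b : FForm C F P) :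
    QPrf (imp (and (and a (neg a)) (circ a)) b) :=
  imp_mp (imp_mp (imp_trans (ax5 _ _) (bc1 a b)) (imp_trans (ax4 _ _) (ax4 _ _)))
    (imp_trans (ax4 _ _) (ax5 _ _))

end QPrf

instance : Preorder (FForm C F P) where
  le a b := QPrf (imp a b)
  le_refl := QPrf.imp_refl
  le_trans _ _ _ := QPrf.imp_trans

variable (C F P) in
/-- The Lindenbaum–Tarski algebra of RQmbC: formulas up to provable equivalence, ordered by
provable implication. -/
def Lindenbaum : Type := Antisymmetrization (FForm C F P) (· ≤ ·)

namespace Lindenbaum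

instance : PartialOrder (Lindenbaum C F P) :=
  inferInstanceAs (PartialOrder (Antisymmetrization (FForm C F P) (· ≤ ·)))

/-- The class of a formula up to provable equivalence. -/
def mk (a : FForm C F P) : Lindenbaum C F P := toAntisymmetrization _ a

theorem mk_surjective : Function.Surjective (mk : FForm C F P → Lindenbaum C F P) :=
  Quotient.mk_surjective

theorem mk_le_mk : mk a ≤ mk b ↔ QPrf (imp a b) := Iff.rfl

/-- The operation of the Lindenbaum–Tarski algebra induced by `¬`. -/
def neg : Lindenbaum C F P → Lindenbaum C F P :=
  Quotient.map FForm.neg fun _ _ h =>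
    let h' := QPrf.rneg (.mp (.mp (.ax3 _ _) h.1) h.2)
    ⟨.mp (.ax4 _ _) h', .mp (.ax5 _ _) h'⟩

/-- The operation of the Lindenbaum–Tarski algebra induced by `∘`. -/
def circ : Lindenbaum C F P → Lindenbaum C F P :=
  Quotient.map FForm.circ fun _ _ h =>
    let h' := QPrf.rcirc (.mp (.mp (.ax3 _ _) h.1) h.2)
    ⟨.mp (.ax4 _ _) h', .mp (.ax5 _ _) h'⟩

instance : Lattice (Lindenbaum C F P) where
  inf := Quotient.map₂ FForm.and fun _ _ h _ _ h' =>
    ⟨.imp_and (.imp_trans (.ax4 _ _) h.1) (.imp_trans (.ax5 _ _) h'.1),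
      .imp_and (.imp_trans (.ax4 _ _) h.2) (.imp_trans (.ax5 _ _) h'.2)⟩
  inf_le_left := Quotient.ind₂ .ax4
  inf_le_right := Quotient.ind₂ .ax5
  le_inf := by
    rintro ⟨a⟩ ⟨b⟩ ⟨c⟩
    exact QPrf.imp_and
  sup := Quotient.map₂ FForm.or fun _ _ h _ _ h' =>
    ⟨.or_imp (.imp_trans h.1 (.ax6 _ _)) (.imp_trans h'.1 (.ax7 _ _)),
      .or_imp (.imp_trans h.2 (.ax6 _ _)) (.imp_trans h'.2 (.ax7 _ _))⟩
  le_sup_left := Quotient.ind₂ .ax6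
  le_sup_right := Quotient.ind₂ .ax7
  sup_le := by
    rintro ⟨a⟩ ⟨b⟩ ⟨c⟩
    exact QPrf.or_imp

instance : HImp (Lindenbaum C F P) where
  himp := Quotient.map₂ FForm.imp fun _ _ h _ _ h' =>
    ⟨QPrf.imp_imp_iff.2 (.imp_trans (QPrf.imp_mp (.ax4 _ _) (.imp_trans (.ax5 _ _) h.2)) h'.1),
      QPrf.imp_imp_iff.2 (.imp_trans (QPrf.imp_mp (.ax4 _ _) (.imp_trans (.ax5 _ _) h.1)) h'.2)⟩

variable [Nonempty (FForm C F P)]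

noncomputable instance : BoundedOrder (Lindenbaum C F P) where
  top := mk (imp (Classical.arbitrary _) (Classical.arbitrary _))
  le_top := Quotient.ind fun _ => .imp_intro (.imp_refl _)
  bot :=
    let a := Classical.arbitrary (FForm C F P)
    mk (and (and a (.neg a)) (.circ a))
  bot_le := Quotient.ind fun _ => .and_neg_circ_imp _ _

noncomputable instance : HeytingAlgebra (Lindenbaum C F P) where
  le_himp_iff := by
    rintro ⟨a⟩ ⟨b⟩ ⟨c⟩
    exact QPrf.imp_imp_iff
  compl x := x ⇨ ⊥
  himp_bot _ := rfl

theorem mk_eq_top_iff : mk a = ⊤ ↔ QPrf a :=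
  top_le_iff.symm.trans ⟨fun h => .mp (mk_le_mk.1 h) (.imp_refl _), fun h => .imp_intro h⟩

noncomputable instance : BooleanAlgebra (Lindenbaum C F P) :=
  .ofRegular fun x => by
    have h : x ⊔ xᶜ = ⊤ := by
      obtain ⟨a, rfl⟩ := mk_surjective x
      rw [sup_comm, ← himp_bot]
      obtain ⟨b, hb⟩ := mk_surjective (⊥ : Lindenbaum C F P)
      rw [← hb]
      exact mk_eq_top_iff.2 (.ax9 a b)
    rw [h]
    exact Heyting.isRegular_top

theorem isBALFI_neg_circ : IsBALFI (neg : Lindenbaum C F P → _) circ := by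
  constructor
  · rintro ⟨a⟩
    exact mk_eq_top_iff.2 (.ax10 a)
  · rintro ⟨a⟩
    exact le_bot_iff.1 (QPrf.and_neg_circ_imp a _)

end Lindenbaum

end Calculus

section Substitution

variable {C : Type} {F P : ℕ → Type}

namespace FTerm

theorem finite_vars : ∀ t : FTerm C F, t.vars.Finite
  | var x => Set.finite_singleton x
  | const _ => Set.finite_empty
  | func _ ts => Set.finite_iUnion fun i => (ts i).finite_vars

/-- Simultaneous substitution of the terms `μ x` for all variables `x`. -/
def simSubst (μ : ℕ → FTerm C F) : FTerm C F → FTerm C F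
  | var x => μ x
  | const c => const c
  | func f ts => func f fun i => (ts i).simSubst μ

theorem simSubst_congr {μ ν : ℕ → FTerm C F} {t : FTerm C F} (h : ∀ x ∈ t.vars, μ x = ν x) :
    t.simSubst μ = t.simSubst ν := by
  induction t with
  | var x => exact h x rfl
  | const c => rfl
  | func f ts ih =>
    exact congrArg (func f) <| funext fun i => ih i fun x hx => h x (Set.mem_iUnion_of_mem i hx)

theorem simSubst_update_of_notMem {x : ℕ} {t : FTerm C F} (hx : x ∉ t.vars) (μ : ℕ → FTerm C F)
    (s : FTerm C F) : t.simSubst (Function.update μ x s) = t.simSubst μ :=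
  simSubst_congr fun _ hy => Function.update_of_ne (ne_of_mem_of_not_mem hy hx) s μ

theorem simSubst_var (t : FTerm C F) : t.simSubst var = t := by
  induction t with
  | var x => rfl
  | const c => rfl
  | func f ts ih => exact congrArg (func f) (funext ih)

theorem simSubst_simSubst (μ ν : ℕ → FTerm C F) (t : FTerm C F) :
    (t.simSubst μ).simSubst ν = t.simSubst fun x => (μ x).simSubst ν := by
  induction t with
  | var x => rfl
  | const c => rfl
  | func f ts ih => exact congrArg (func f) (funext ih)

theorem tsubst_eq_simSubst (x : ℕ) (s t : FTerm C F) :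
    tsubst x s t = t.simSubst (Function.update var x s) := by
  induction t with
  | var y => simp only [tsubst, simSubst, Function.update_apply]
  | const c => rfl
  | func f ts ih => exact congrArg (func f) (funext ih)

theorem notMem_vars_tsubst {x : ℕ} {s : FTerm C F} (hx : x ∉ s.vars) (t : FTerm C F) :
    x ∉ (tsubst x s t).vars := by
  induction t with
  | var y =>
    rw [tsubst]
    split_ifs with h
    · exact hx
    · exact Ne.symm h
  | const _ => exact Set.notMem_empty x
  | func f ts ih => simpa only [tsubst, vars, Set.mem_iUnion, not_exists] using ih

end FTerm

namespace FForm

/-- The set of variables bound by a quantifier in a formula. -/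
def bv : FForm C F P → Set ℕ
  | rel _ _ => ∅
  | and a b | or a b | imp a b => bv a ∪ bv b
  | neg a | circ a => bv a
  | all x a | ex x a => insert x (bv a)

theorem finite_fv (a : FForm C F P) : (fv a).Finite := by
  induction a with
  | rel _ ts => exact Set.finite_iUnion fun i => (ts i).finite_vars
  | and a b iha ihb | or a b iha ihb | imp a b iha ihb => exact iha.union ihb
  | neg _ ih | circ _ ih => exact ih
  | all x a ih | ex x a ih => exact ih.sdiff

theorem finite_bv (a : FForm C F P) : (bv a).Finite := by
  induction a with
  | rel _ _ => exact Set.finite_empty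
  | and a b iha ihb | or a b iha ihb | imp a b iha ihb => exact iha.union ihb
  | neg _ ih | circ _ ih => exact ih
  | all x a ih | ex x a ih => exact ih.insert x

/-- Simultaneous substitution of the terms `μ x` for the free occurrences of all variables `x`.
Bound variables are not renamed, so variables of the `μ x` may be captured. -/
def simSubst (μ : ℕ → FTerm C F) : FForm C F P → FForm C F P
  | rel p ts => rel p fun i => (ts i).simSubst μ
  | and a b => and (simSubst μ a) (simSubst μ b)
  | or a b => or (simSubst μ a) (simSubst μ b)
  | imp a b => imp (simSubst μ a) (simSubst μ b)
  | neg a => neg (simSubst μ a)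
  | circ a => circ (simSubst μ a)
  | all x a => all x (simSubst (Function.update μ x (.var x)) a)
  | ex x a => ex x (simSubst (Function.update μ x (.var x)) a)

theorem bv_simSubst (μ : ℕ → FTerm C F) (a : FForm C F P) : (a.simSubst μ).bv = a.bv := by
  induction a generalizing μ with
  | rel p ts => rfl
  | and a b iha ihb | or a b iha ihb | imp a b iha ihb => exact congrArg₂ (· ∪ ·) (iha μ) (ihb μ)
  | neg _ ih | circ _ ih => exact ih μ
  | all x a ih | ex x a ih => exact congrArg (insert x) (ih _)

theorem simSubst_congr {μ ν : ℕ → FTerm C F} {a : FForm C F P} (h : ∀ x ∈ fv a, μ x = ν x) :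
    a.simSubst μ = a.simSubst ν := by
  induction a generalizing μ ν with
  | rel p ts =>
    exact congrArg (rel p) <| funext fun i =>
      FTerm.simSubst_congr fun x hx => h x (Set.mem_iUnion_of_mem i hx)
  | and a b iha ihb | or a b iha ihb | imp a b iha ihb =>
    rw [simSubst, iha fun x hx => h x (.inl hx), ihb fun x hx => h x (.inr hx), simSubst]
  | neg a ih | circ a ih => rw [simSubst, ih h, simSubst]
  | all x a ih | ex x a ih =>
    rw [simSubst, simSubst, ih fun y hy => ?_]
    rcases eq_or_ne y x with rfl | hyx
    · rw [Function.update_self, Function.update_self]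
    · rw [Function.update_of_ne hyx, Function.update_of_ne hyx, h y ⟨hy, hyx⟩]

theorem simSubst_var (a : FForm C F P) : a.simSubst .var = a := by
  induction a with
  | rel p ts => exact congrArg (rel p) (funext fun i => (ts i).simSubst_var)
  | and a b iha ihb | or a b iha ihb | imp a b iha ihb => rw [simSubst, iha, ihb]
  | neg a ih | circ a ih => rw [simSubst, ih]
  | all x a ih | ex x a ih => rw [simSubst, Function.update_eq_self, ih]

theorem simSubst_simSubst {μ ν : ℕ → FTerm C F} {a : FForm C F P}
    (h : ∀ x ∈ bv a, ν x = .var x ∨ ∀ y ≠ x, x ∉ (μ y).vars) :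
    (a.simSubst μ).simSubst ν = a.simSubst fun x => (μ x).simSubst ν := by
  induction a generalizing μ ν with
  | rel p ts => exact congrArg (rel p) (funext fun i => FTerm.simSubst_simSubst μ ν (ts i))
  | and a b iha ihb | or a b iha ihb | imp a b iha ihb =>
    rw [simSubst, simSubst, iha fun x hx => h x (.inl hx), ihb fun x hx => h x (.inr hx), simSubst]
  | neg a ih | circ a ih => rw [simSubst, simSubst, ih h, simSubst]
  | all x a ih | ex x a ih =>
    have hμν : (fun y => (Function.update μ x (.var x) y).simSubst (Function.update ν x (.var x)))
        = Function.update (fun y => (μ y).simSubst ν) x (.var x) := by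
      refine Function.eq_update_iff.2 ⟨?_, fun y hyx => ?_⟩
      · simp only [Function.update_self, FTerm.simSubst]
      · rw [Function.update_of_ne hyx]
        rcases h x (.inl rfl) with hν | hμ
        · rw [← hν, Function.update_eq_self]
        · exact FTerm.simSubst_update_of_notMem (hμ y hyx) ν _
    rw [simSubst, simSubst, ih fun y hy => ?_, hμν, simSubst]
    rcases eq_or_ne y x with rfl | hyx
    · exact .inl (Function.update_self ..)
    · refine (h y (.inr hy)).imp (Function.update_of_ne hyx _ _).trans fun hμ z hzy => ?_
      rcases eq_or_ne z x with rfl | hzx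
      · rw [Function.update_self]
        exact hyx
      · rw [Function.update_of_ne hzx]
        exact hμ z hzy

theorem subst_eq_simSubst (x : ℕ) (t : FTerm C F) (a : FForm C F P) :
    subst x t a = a.simSubst (Function.update .var x t) := by
  induction a with
  | rel p ts => exact congrArg (rel p) (funext fun i => FTerm.tsubst_eq_simSubst x t (ts i))
  | and a b iha ihb | or a b iha ihb | imp a b iha ihb => rw [subst, iha, ihb, simSubst]
  | neg a ih | circ a ih => rw [subst, ih, simSubst]
  | all y a ih | ex y a ih =>
    rw [subst, simSubst]
    split_ifs with hyx
    · rw [hyx, Function.update_idem, Function.update_eq_self, simSubst_var]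
    · rw [ih, Function.update_comm (Ne.symm hyx), Function.update_eq_self]

theorem subst_var_self (x : ℕ) (a : FForm C F P) : subst x (.var x) a = a := by
  rw [subst_eq_simSubst, Function.update_eq_self, simSubst_var]

theorem subst_simSubst_update {μ : ℕ → FTerm C F} {x : ℕ} (hμ : ∀ y ≠ x, x ∉ (μ y).vars)
    (t : FTerm C F) (a : FForm C F P) :
    subst x t (a.simSubst (Function.update μ x (.var x))) =
      a.simSubst (Function.update μ x t) := by
  rw [subst_eq_simSubst, simSubst_simSubst]
  · congr 1
    refine Function.eq_update_iff.2 ⟨?_, fun y hyx => ?_⟩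
    · simp only [Function.update_self, FTerm.simSubst]
    · rw [Function.update_of_ne hyx, FTerm.simSubst_update_of_notMem (hμ y hyx), FTerm.simSubst_var]
  · intro y _
    rcases eq_or_ne y x with rfl | hyx
    · exact .inr fun z hzy => (Function.update_of_ne hzy _ μ).symm ▸ hμ z hzy
    · exact .inl (Function.update_of_ne hyx _ _)

theorem subst_var_subst_var {x z : ℕ} {a : FForm C F P} (hfv : z ∉ fv a) (hbv : z ∉ bv a) :
    subst z (.var x) (subst x (.var z) a) = a := by
  rw [subst_eq_simSubst, subst_eq_simSubst, simSubst_simSubst]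
  · conv_rhs => rw [← a.simSubst_var]
    refine simSubst_congr fun y hy => ?_
    rcases eq_or_ne y x with rfl | hyx
    · simp only [Function.update_self, FTerm.simSubst]
    · simp only [Function.update_of_ne hyx, FTerm.simSubst]
      exact Function.update_of_ne (ne_of_mem_of_not_mem hy hfv) _ _
  · exact fun y hy => .inl (Function.update_of_ne (ne_of_mem_of_not_mem hy hbv) _ _)

theorem notMem_fv_subst {x : ℕ} {t : FTerm C F} (hx : x ∉ t.vars) (a : FForm C F P) :
    x ∉ fv (subst x t a) := by
  induction a with
  | rel p ts =>
    simpa only [subst, fv, Set.mem_iUnion, not_exists] using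
      fun i => FTerm.notMem_vars_tsubst hx (ts i)
  | and a b iha ihb | or a b iha ihb | imp a b iha ihb => exact not_or.2 ⟨iha, ihb⟩
  | neg _ ih | circ _ ih => exact ih
  | all y a ih | ex y a ih =>
    rw [subst]
    split_ifs with hyx
    · exact fun h => h.2 hyx.symm
    · exact fun h => ih h.1

theorem freeFor_of_disjoint {t : FTerm C F} {a : FForm C F P} (h : Disjoint t.vars (bv a)) (x : ℕ) :
    FreeFor t x a := by
  induction a with
  | rel p ts => trivial
  | and a b iha ihb | or a b iha ihb | imp a b iha ihb =>
    exact ⟨iha (h.mono_right Set.subset_union_left), ihb (h.mono_right Set.subset_union_right)⟩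
  | neg a ih | circ a ih => exact ih h
  | all y a ih | ex y a ih =>
    rw [bv, Set.disjoint_insert_right] at h
    exact .inr ⟨h.1, ih h.2⟩

theorem freeFor_var_self (x : ℕ) (a : FForm C F P) : FreeFor (.var x) x a := by
  induction a with
  | rel _ _ => trivial
  | and a b iha ihb | or a b iha ihb | imp a b iha ihb => exact ⟨iha, ihb⟩
  | neg _ ih | circ _ ih => exact ih
  | all y a ih | ex y a ih =>
    rcases eq_or_ne y x with rfl | hyx
    · exact .inl fun h => h.2 rfl
    · exact .inr ⟨hyx, ih⟩

theorem freeFor_var_subst_var {x z : ℕ} {a : FForm C F P} (hfv : z ∉ fv a) (hbv : z ∉ bv a) :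
    FreeFor (.var x) z (subst x (.var z) a) := by
  induction a with
  | rel p ts => trivial
  | and a b iha ihb | or a b iha ihb | imp a b iha ihb =>
    rw [fv, Set.mem_union, not_or] at hfv
    rw [bv, Set.mem_union, not_or] at hbv
    exact ⟨iha hfv.1 hbv.1, ihb hfv.2 hbv.2⟩
  | neg a ih | circ a ih => exact ih hfv hbv
  | all y a ih | ex y a ih =>
    rw [bv, Set.mem_insert_iff, not_or] at hbv
    rw [subst]
    split_ifs with hyx
    · exact .inl hfv
    · exact .inr ⟨hyx, ih (fun hz => hfv ⟨hz, hbv.1⟩) hbv.2⟩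

end FForm

end Substitution

section CanonicalStructure

variable {C : Type} {F P : ℕ → Type} {X : Set ℕ} {a c : FForm C F P} {x z : ℕ}

theorem QPrf.imp_all_of_imp_subst (h : QPrf (imp c (subst x (.var z) a))) (hzx : z ≠ x)
    (hc : z ∉ fv c) (hfv : z ∉ fv a) (hbv : z ∉ bv a) : QPrf (imp c (all x a)) := by
  have hrename : QPrf (imp (all z (subst x (.var z) a)) a) := by
    simpa only [subst_var_subst_var hfv hbv] using axAll z _ _ (freeFor_var_subst_var hfv hbv)
  have hx : x ∉ fv (all z (subst x (.var z) a)) := fun hx => notMem_fv_subst hzx.symm a hx.1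
  exact imp_trans (allIn z h hc) (allIn x hrename hx)

theorem QPrf.ex_imp_of_subst_imp (h : QPrf (imp (subst x (.var z) a) c)) (hzx : z ≠ x)
    (hc : z ∉ fv c) (hfv : z ∉ fv a) (hbv : z ∉ bv a) : QPrf (imp (ex x a) c) := by
  have hrename : QPrf (imp a (ex z (subst x (.var z) a))) := by
    simpa only [subst_var_subst_var hfv hbv] using axEx z _ _ (freeFor_var_subst_var hfv hbv)
  have hx : x ∉ fv (ex z (subst x (.var z) a)) := fun hx => notMem_fv_subst hzx.symm a hx.1
  exact imp_trans (exIn x hrename hx) (exIn z h hc)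

/-- The terms containing no variable from `X`: the domain of the canonical structure. -/
structure ParamTerm (C : Type) (F : ℕ → Type) (X : Set ℕ) : Type where
  val : FTerm C F
  disjoint_vars : Disjoint val.vars X

namespace ParamTerm

/-- A variable outside `X`, as a term containing no variable from `X`. -/
def var (h : z ∉ X) : ParamTerm C F X := ⟨.var z, Set.disjoint_singleton_left.2 h⟩

/-- The interpretation of constants in the canonical structure. -/
def const (c : C) : ParamTerm C F X := ⟨.const c, Set.empty_disjoint X⟩

/-- The interpretation of function symbols in the canonical structure. -/
def func {n : ℕ} (f : F n) (ts : Fin n → ParamTerm C F X) : ParamTerm C F X :=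
  ⟨.func f fun i => (ts i).val, Set.disjoint_iUnion_left.2 fun i => (ts i).disjoint_vars⟩

theorem val_tden (μ : ℕ → ParamTerm C F X) (t : FTerm C F) :
    (tden const (fun _ => func) μ t).val = t.simSubst (val ∘ μ) := by
  induction t with
  | var x => rfl
  | const c => rfl
  | func f ts ih => exact congrArg (FTerm.func f) (funext ih)

theorem subst_simSubst_val (hx : x ∈ X) (μ : ℕ → ParamTerm C F X) (t : ParamTerm C F X)
    (a : FForm C F P) :
    subst x t.val (a.simSubst (Function.update (val ∘ μ) x (.var x))) =
      a.simSubst (val ∘ Function.update μ x t) := by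
  rw [Function.comp_update]
  exact subst_simSubst_update (fun y _ hy => Set.disjoint_left.1 (μ y).disjoint_vars hy hx) t.val a

end ParamTerm

namespace Lindenbaum

theorem isGLB_mk_all (hX : X.Finite) (ha : bv (all x a) ⊆ X) :
    IsGLB (Set.range fun t : ParamTerm C F X => mk (subst x t.val a)) (mk (all x a)) := by
  obtain ⟨hx, ha⟩ := Set.insert_subset_iff.1 ha
  constructor
  · rintro _ ⟨t, rfl⟩
    exact .axAll x _ _ (freeFor_of_disjoint (t.disjoint_vars.mono_right ha) x)
  · intro y hy
    obtain ⟨c, rfl⟩ := mk_surjective y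
    obtain ⟨z, hz⟩ := (hX.union ((finite_fv c).union (finite_fv a))).exists_notMem
    simp only [Set.mem_union, not_or] at hz
    obtain ⟨hzX, hzc, hza⟩ := hz
    exact (mk_le_mk.1 (hy ⟨ParamTerm.var hzX, rfl⟩)).imp_all_of_imp_subst
      (ne_of_mem_of_not_mem hx hzX).symm hzc hza fun h => hzX (ha h)

theorem isLUB_mk_ex (hX : X.Finite) (ha : bv (ex x a) ⊆ X) :
    IsLUB (Set.range fun t : ParamTerm C F X => mk (subst x t.val a)) (mk (ex x a)) := by
  obtain ⟨hx, ha⟩ := Set.insert_subset_iff.1 ha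
  constructor
  · rintro _ ⟨t, rfl⟩
    exact .axEx x _ _ (freeFor_of_disjoint (t.disjoint_vars.mono_right ha) x)
  · intro y hy
    obtain ⟨c, rfl⟩ := mk_surjective y
    obtain ⟨z, hz⟩ := (hX.union ((finite_fv c).union (finite_fv a))).exists_notMem
    simp only [Set.mem_union, not_or] at hz
    obtain ⟨hzX, hzc, hza⟩ := hz
    exact (mk_le_mk.1 (hy ⟨ParamTerm.var hzX, rfl⟩)).ex_imp_of_subst_imp
      (ne_of_mem_of_not_mem hx hzX).symm hzc hza fun h => hzX (ha h)

variable [Nonempty (FForm C F P)]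

/-- The embedding of the Lindenbaum–Tarski algebra in its completion, the algebra of truth values
of the canonical structure. -/
noncomputable abbrev embed :
    BoundedLatticeHom (Lindenbaum C F P) (DedekindCut (Lindenbaum C F P)) :=
  principalHom _

variable (X) in
/-- The interpretation of formulas in the canonical structure with domain `ParamTerm C F X`. -/
noncomputable def canonicalInt :
    FForm C F P → (ℕ → ParamTerm C F X) → DedekindCut (Lindenbaum C F P) :=
  fint (Function.extend embed (embed ∘ neg) compl) (Function.extend embed (embed ∘ circ) ⊤)
    ParamTerm.const (fun _ => ParamTerm.func) fun _ p ts => embed (mk (rel p fun i => (ts i).val))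

theorem canonicalInt_eq (hX : X.Finite) (ha : bv a ⊆ X) (μ : ℕ → ParamTerm C F X) :
    canonicalInt X a μ = embed (mk (a.simSubst (ParamTerm.val ∘ μ))) := by
  induction a generalizing μ with
  | rel p ts =>
    exact congrArg (embed <| mk <| rel p ·) (funext fun i => ParamTerm.val_tden μ (ts i))
  | and a b iha ihb =>
    obtain ⟨ha, hb⟩ := Set.union_subset_iff.1 ha
    exact (congrArg₂ _ (iha ha μ) (ihb hb μ)).trans (map_inf embed _ _).symm
  | or a b iha ihb =>
    obtain ⟨ha, hb⟩ := Set.union_subset_iff.1 ha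
    exact (congrArg₂ _ (iha ha μ) (ihb hb μ)).trans (map_sup embed _ _).symm
  | imp a b iha ihb =>
    obtain ⟨ha, hb⟩ := Set.union_subset_iff.1 ha
    calc canonicalInt X (imp a b) μ
        = (canonicalInt X a μ)ᶜ ⊔ canonicalInt X b μ := rfl
      _ = embed ((mk (a.simSubst (ParamTerm.val ∘ μ)))ᶜ ⊔ mk (b.simSubst (ParamTerm.val ∘ μ))) := by
        rw [iha ha, ihb hb, map_sup, map_compl']
      _ = embed (mk ((imp a b).simSubst (ParamTerm.val ∘ μ))) := by
        rw [sup_comm, ← himp_eq]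
        rfl
  | neg a ih | circ a ih =>
    exact (congrArg _ (ih ha μ)).trans (principalHom_injective.extend_apply ..)
  | all x a ih =>
    obtain ⟨hx, ha'⟩ := Set.insert_subset_iff.1 ha
    refine Eq.trans (iInf_congr fun t => ?_)
      (principal_eq_iInf (isGLB_mk_all hX (by rwa [bv, bv_simSubst]))).symm
    rw [ParamTerm.subst_simSubst_val hx]
    exact ih ha' _
  | ex x a ih =>
    obtain ⟨hx, ha'⟩ := Set.insert_subset_iff.1 ha
    refine Eq.trans (iSup_congr fun t => ?_)
      (principal_eq_iSup (isLUB_mk_ex hX (by rwa [bv, bv_simSubst]))).symm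
    rw [ParamTerm.subst_simSubst_val hx]
    exact ih ha' _

end Lindenbaum

end CanonicalStructure

section Completeness

variable {C : Type} {F P : ℕ → Type} {a : FForm C F P}

theorem QValid.qPrf_of_fv_eq_empty (h : QValid a) (ha : fv a = ∅) : QPrf a := by
  have : Nonempty (FForm C F P) := ⟨a⟩
  obtain ⟨z, hz⟩ := (finite_bv a).exists_notMem
  let μ (_ : ℕ) : ParamTerm C F (bv a) := .var hz
  have htop : Lindenbaum.mk (a.simSubst (ParamTerm.val ∘ μ)) = ⊤ :=
    principalHom_injective <|
      calc Lindenbaum.embed (Lindenbaum.mk (a.simSubst (ParamTerm.val ∘ μ)))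
          = Lindenbaum.canonicalInt (bv a) a μ :=
            (Lindenbaum.canonicalInt_eq (finite_bv a) subset_rfl μ).symm
        _ = ⊤ := h _ ⟨.var hz⟩ _ _ _ (Lindenbaum.isBALFI_neg_circ.extend principalHom_injective)
            _ _ _ μ
        _ = Lindenbaum.embed ⊤ := (map_top _).symm
  have hself : a.simSubst (ParamTerm.val ∘ μ) = a :=
    (simSubst_congr fun x hx => absurd hx (ha ▸ Set.notMem_empty x)).trans a.simSubst_var
  exact Lindenbaum.mk_eq_top_iff.1 (hself ▸ htop)

theorem QPrf.of_all {x : ℕ} (h : QPrf (all x a)) : QPrf a := by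
  simpa only [subst_var_self] using mp (axAll x _ a (freeFor_var_self x a)) h

theorem QValid.all (h : QValid a) (x : ℕ) : QValid (all x a) :=
  fun U hU A _ nB cB hB iC iF iP _ => iInf_eq_top.2 fun _ => h U hU A nB cB hB iC iF iP _

theorem QValid.qPrf (h : QValid a) : QPrf a := by
  suffices H : ∀ (s : Finset ℕ) (b : FForm C F P), fv b ⊆ s → QValid b → QPrf b from
    H (finite_fv a).toFinset a (finite_fv a).coe_toFinset.ge h
  intro s
  induction s using Finset.induction_on with
  | empty =>
    intro b hb h
    exact h.qPrf_of_fv_eq_empty (Set.subset_empty_iff.1 (by simpa only [Finset.coe_empty] using hb))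
  | insert x s _ ih =>
    intro b hb h
    refine QPrf.of_all (ih (.all x b) ?_ (h.all x))
    rwa [fv, Set.sdiff_singleton_subset_iff, ← Finset.coe_insert]

theorem rqmbc_completeness_general {Γ : Set (FForm C F P)} {φ : FForm C F P}
    (h : QConseq Γ φ) : QDeriv Γ φ :=
  h.imp QValid.qPrf fun ⟨γ, l, hγ, hl, hval⟩ => ⟨γ, l, hγ, hl, hval.qPrf⟩

end Completeness

/-- Theorem 8.20, Completeness of RQmbC w.r.t. BALFI semantics: for
sentences (closed formulas) `Γ ∪ {φ}`, if `Γ ⊨_RQmbC φ` then `Γ ⊢_RQmbC φ`. -/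
theorem rqmbc_completeness
    (C : Type) (F P : ℕ → Type)
    [Countable C] [∀ n, Countable (F n)] [∀ n, Countable (P n)]
    (hP : ∃ n, Nonempty (P n))
    (Γ : Set (FForm C F P)) (φ : FForm C F P)
    (hφ : FForm.fv φ = ∅) (hΓ : ∀ γ ∈ Γ, FForm.fv γ = ∅)
    (h : QConseq Γ φ) : QDeriv Γ φ := by
  exact rqmbc_completeness_general h

end LFI
end
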